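/- arXiv:1411.6332 — 2 statements merged into one kernel-verified Lean document; each statement's English description precedes it below -/
import Mathlib

section
/- For every q ∈ [1,∞) there exists a positive constant C_q such that for all t ≥ 0, ‖∂_x U^r(t,·)‖_{L^q(ℝ)} ≤ C_q (1+t)^{−1+1/q} and ‖∂_x² U^r(t,·)‖_{L^q(ℝ)} ≤ C_q (1+t)^{−1}; moreover there exists C > 0 such that sup_{x∈ℝ}|∂_x U^r(t,x)| ≤ C(1+t)^{−1} and sup_{x∈ℝ}|∂_x² U^r(t,x)| ≤ C(1+t)^{−1} for all t ≥ 0. -/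
open Real MeasureTheory Filter Set

/-- The smooth monotone initial datum `w₀(x) = (w₋+w₊)/2 + ((w₊−w₋)/2)·tanh x`. -/
noncomputable def w0 (wm wp x : ℝ) : ℝ := (wm + wp) / 2 + ((wp - wm) / 2) * Real.tanh x

/-! The normalised wave `s = tanh ∘ Y(t, ·)` solves the autonomous equation
`s' = (1 - s²) / (1 + k (1 - s²))` with `k = t (λ₊ - λ₋) / 2`, whose right-hand side is at most
`1 / (1 + k)`. Since `s` is monotone and bounded, `s'` is also bounded in `L¹` uniformly in `k`;
the total variation of `s'` is computed exactly from a primitive of `|s''|`, and is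
`O(1 / (1 + k))`. Sup and `L¹` bounds of this kind survive composition with a map having two bounded
derivatives, in particular with `λ⁻¹`, because `∫ |w'|² ≤ sup |w'| · ∫ |w'|`. Interpolation between
`L¹` and `L^∞` then gives every `L^q`. -/

section Integrals

theorem eLpNorm_one_le_of_norm_le_deriv {E : Type*} [NormedAddCommGroup E] {g : ℝ → E}
    {H h : ℝ → ℝ} {M : ℝ} (hH : ∀ x, HasDerivAt H (h x) x) (hgh : ∀ x, ‖g x‖ ≤ h x)
    (hM : ∀ x, |H x| ≤ M) : eLpNorm g 1 volume ≤ ENNReal.ofReal (2 * M) := by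
  have hmono : Monotone H :=
    monotone_of_hasDerivAt_nonneg hH fun x => (norm_nonneg _).trans (hgh x)
  have himage : H '' univ ⊆ Icc (-M) M := by
    rintro _ ⟨x, -, rfl⟩
    exact abs_le.mp (hM x)
  calc eLpNorm g 1 volume = ∫⁻ x, ‖g x‖ₑ := eLpNorm_one_eq_lintegral_enorm
    _ ≤ ∫⁻ x in univ, ENNReal.ofReal (h x) := by
        rw [setLIntegral_univ]
        refine lintegral_mono fun x => ?_
        rw [← ofReal_norm]
        exact ENNReal.ofReal_le_ofReal (hgh x)
    _ = volume (H '' univ) :=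
        lintegral_deriv_eq_volume_image_of_monotoneOn MeasurableSet.univ
          (fun x _ => (hH x).hasDerivWithinAt) (hmono.monotoneOn _)
    _ ≤ volume (Icc (-M) M) := measure_mono himage
    _ = ENNReal.ofReal (2 * M) := by rw [Real.volume_Icc]; ring_nf

theorem eLpNorm_le_add_of_norm_le_add {α E F G : Type*} {_ : MeasurableSpace α} {μ : Measure α}
    [NormedAddCommGroup E] [NormedAddCommGroup F] [NormedAddCommGroup G] {u : α → E} {g : α → F}
    {h : α → G} (hg : AEStronglyMeasurable g μ) (hh : AEStronglyMeasurable h μ) {b c : ℝ}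
    (hb : 0 ≤ b) (hc : 0 ≤ c) (hu : ∀ x, ‖u x‖ ≤ b * ‖g x‖ + c * ‖h x‖) {p : ENNReal}
    (hp : 1 ≤ p) :
    eLpNorm u p μ ≤ ENNReal.ofReal b * eLpNorm g p μ + ENNReal.ofReal c * eLpNorm h p μ := by
  calc eLpNorm u p μ ≤ eLpNorm ((b • fun x => ‖g x‖) + c • fun x => ‖h x‖) p μ :=
        eLpNorm_mono_real hu
    _ ≤ eLpNorm (b • fun x => ‖g x‖) p μ + eLpNorm (c • fun x => ‖h x‖) p μ :=
        eLpNorm_add_le (hg.norm.const_smul b) (hh.norm.const_smul c) hp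
    _ = ENNReal.ofReal b * eLpNorm g p μ + ENNReal.ofReal c * eLpNorm h p μ := by
        rw [eLpNorm_const_smul, eLpNorm_const_smul, eLpNorm_norm, eLpNorm_norm,
          Real.enorm_of_nonneg hb, Real.enorm_of_nonneg hc]

theorem eLpNorm_le_eLpNorm_top_rpow_mul_eLpNorm_one_rpow {α E : Type*} {_ : MeasurableSpace α}
    {μ : Measure α} [NormedAddCommGroup E] {g : α → E} (hg : AEStronglyMeasurable g μ) {q : ℝ}
    (hq : 1 ≤ q) :
    eLpNorm g (ENNReal.ofReal q) μ ≤ eLpNorm g ⊤ μ ^ (1 - 1 / q) * eLpNorm g 1 μ ^ (1 / q) := by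
  have hq₀ : 0 < q := one_pos.trans_le hq
  have hpow (x : α) : ‖g x‖ₑ ^ q = ‖g x‖ₑ ^ (q - 1) * ‖g x‖ₑ := by
    have h := ENNReal.rpow_add_of_nonneg (x := ‖g x‖ₑ) (q - 1) 1 (by linarith) one_pos.le
    rwa [sub_add_cancel, ENNReal.rpow_one] at h
  have hint : ∫⁻ x, ‖g x‖ₑ ^ q ∂μ ≤ eLpNorm g ⊤ μ ^ (q - 1) * eLpNorm g 1 μ := by
    rw [eLpNorm_one_eq_lintegral_enorm, ← lintegral_const_mul'' _ hg.enorm]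
    refine lintegral_mono_ae ?_
    filter_upwards [ae_le_eLpNormEssSup (f := g) (μ := μ)] with x hx
    rw [hpow, eLpNorm_exponent_top]
    gcongr
  calc eLpNorm g (ENNReal.ofReal q) μ = (∫⁻ x, ‖g x‖ₑ ^ q ∂μ) ^ (1 / q) := by
        rw [eLpNorm_eq_lintegral_rpow_enorm_toReal (by simpa using hq₀) ENNReal.ofReal_ne_top,
          ENNReal.toReal_ofReal hq₀.le]
    _ ≤ (eLpNorm g ⊤ μ ^ (q - 1) * eLpNorm g 1 μ) ^ (1 / q) := by gcongr
    _ = eLpNorm g ⊤ μ ^ (1 - 1 / q) * eLpNorm g 1 μ ^ (1 / q) := by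
        rw [ENNReal.mul_rpow_of_nonneg _ _ (by positivity), ← ENNReal.rpow_mul]
        congr 2
        field_simp

theorem eLpNorm_le_mul_rpow_of_norm_le_of_eLpNorm_one_le {α E : Type*} {_ : MeasurableSpace α}
    {μ : Measure α} [NormedAddCommGroup E] {g : α → E} (hg : AEStronglyMeasurable g μ)
    {K T a b q : ℝ} (hK : 0 ≤ K) (hT : 0 < T) (hsup : ∀ᵐ x ∂μ, ‖g x‖ ≤ K * T ^ a)
    (hone : eLpNorm g 1 μ ≤ ENNReal.ofReal (K * T ^ b)) (hq : 1 ≤ q) :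
    eLpNorm g (ENNReal.ofReal q) μ ≤ ENNReal.ofReal (K * T ^ (a * (1 - 1 / q) + b * (1 / q))) := by
  have hq₀ : 0 ≤ 1 / q := by positivity
  have hq₁ : 0 ≤ 1 - 1 / q := sub_nonneg.mpr ((div_le_one (one_pos.trans_le hq)).mpr hq)
  have htop : eLpNorm g ⊤ μ ≤ ENNReal.ofReal (K * T ^ a) :=
    eLpNorm_exponent_top.trans_le (eLpNormEssSup_le_of_ae_bound hsup)
  calc eLpNorm g (ENNReal.ofReal q) μ
      ≤ eLpNorm g ⊤ μ ^ (1 - 1 / q) * eLpNorm g 1 μ ^ (1 / q) :=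
        eLpNorm_le_eLpNorm_top_rpow_mul_eLpNorm_one_rpow hg hq
    _ ≤ ENNReal.ofReal (K * T ^ a) ^ (1 - 1 / q) * ENNReal.ofReal (K * T ^ b) ^ (1 / q) := by
        gcongr
    _ = ENNReal.ofReal ((K * T ^ a) ^ (1 - 1 / q) * (K * T ^ b) ^ (1 / q)) := by
        rw [ENNReal.ofReal_rpow_of_nonneg (by positivity) hq₁,
          ENNReal.ofReal_rpow_of_nonneg (by positivity) hq₀, ENNReal.ofReal_mul (by positivity)]
    _ = ENNReal.ofReal (K * T ^ (a * (1 - 1 / q) + b * (1 / q))) := by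
        rw [mul_rpow hK (by positivity), mul_rpow hK (by positivity), mul_mul_mul_comm,
          ← rpow_add_of_nonneg hK hq₁ hq₀, ← rpow_mul hT.le, ← rpow_mul hT.le, ← rpow_add hT,
          sub_add_cancel, rpow_one]

end Integrals

/-- The sizes that `v'` and `v''` have along a rarefaction wave which has spread out by the factor
`1 / ε`: both are `O(ε)` uniformly, `v'` is `O(1)` in `L¹`, and `v''` is `O(ε)` in `L¹`. -/
structure HasRarefactionDecay (K ε : ℝ) (v : ℝ → ℝ) : Prop where
  differentiable : Differentiable ℝ v
  differentiable_deriv : Differentiable ℝ (deriv v)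
  abs_deriv_le : ∀ x, |deriv v x| ≤ K * ε
  abs_deriv_deriv_le : ∀ x, |deriv (deriv v) x| ≤ K * ε
  eLpNorm_deriv_le : eLpNorm (deriv v) 1 volume ≤ ENNReal.ofReal K
  eLpNorm_deriv_deriv_le : eLpNorm (deriv (deriv v)) 1 volume ≤ ENNReal.ofReal (K * ε)

namespace HasRarefactionDecay

variable {K ε : ℝ} {v : ℝ → ℝ}

theorem mono {K' ε' : ℝ} (hv : HasRarefactionDecay K ε v) (hK : K ≤ K') (hKε : K * ε ≤ K' * ε') :
    HasRarefactionDecay K' ε' v where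
  differentiable := hv.differentiable
  differentiable_deriv := hv.differentiable_deriv
  abs_deriv_le x := (hv.abs_deriv_le x).trans hKε
  abs_deriv_deriv_le x := (hv.abs_deriv_deriv_le x).trans hKε
  eLpNorm_deriv_le := hv.eLpNorm_deriv_le.trans (ENNReal.ofReal_le_ofReal hK)
  eLpNorm_deriv_deriv_le := hv.eLpNorm_deriv_deriv_le.trans (ENNReal.ofReal_le_ofReal hKε)

theorem nonneg (hv : HasRarefactionDecay K ε v) (hε : 0 < ε) : 0 ≤ K :=
  nonneg_of_mul_nonneg_left ((abs_nonneg _).trans (hv.abs_deriv_le 0)) hε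

theorem eLpNorm_deriv_le_rpow {T q : ℝ} (hv : HasRarefactionDecay K T⁻¹ v) (hT : 0 < T)
    (hq : 1 ≤ q) :
    eLpNorm (deriv v) (ENNReal.ofReal q) volume ≤ ENNReal.ofReal (K * T ^ (-1 + 1 / q)) := by
  have h := eLpNorm_le_mul_rpow_of_norm_le_of_eLpNorm_one_le (a := -1) (b := 0)
    (aestronglyMeasurable_deriv v volume) (hv.nonneg (inv_pos.mpr hT)) hT
    (ae_of_all _ fun x => by rw [rpow_neg_one]; exact hv.abs_deriv_le x)
    (by rw [rpow_zero, mul_one]; exact hv.eLpNorm_deriv_le) hq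
  rwa [show (-1 : ℝ) * (1 - 1 / q) + 0 * (1 / q) = -1 + 1 / q by ring] at h

theorem eLpNorm_deriv_deriv_le_rpow {T q : ℝ} (hv : HasRarefactionDecay K T⁻¹ v) (hT : 0 < T)
    (hq : 1 ≤ q) :
    eLpNorm (deriv (deriv v)) (ENNReal.ofReal q) volume ≤ ENNReal.ofReal (K * T ^ (-1 : ℝ)) := by
  have h := eLpNorm_le_mul_rpow_of_norm_le_of_eLpNorm_one_le (a := -1) (b := -1)
    (aestronglyMeasurable_deriv (deriv v) volume) (hv.nonneg (inv_pos.mpr hT)) hT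
    (ae_of_all _ fun x => by rw [rpow_neg_one]; exact hv.abs_deriv_deriv_le x)
    (by rw [rpow_neg_one]; exact hv.eLpNorm_deriv_deriv_le) hq
  rwa [show (-1 : ℝ) * (1 - 1 / q) + -1 * (1 / q) = -1 by ring] at h

section Comp

variable {L L₁ L₂ : ℝ → ℝ} {A : ℝ}

theorem deriv_comp_eq (hv : HasRarefactionDecay K ε v)
    (hL : ∀ x, HasDerivAt L (L₁ (v x)) (v x)) :
    deriv (L ∘ v) = fun x => L₁ (v x) * deriv v x :=
  funext fun x => ((hL x).comp x (hv.differentiable x).hasDerivAt).deriv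

theorem hasDerivAt_deriv_comp (hv : HasRarefactionDecay K ε v)
    (hL : ∀ x, HasDerivAt L (L₁ (v x)) (v x)) (hL₁ : ∀ x, HasDerivAt L₁ (L₂ (v x)) (v x)) (x : ℝ) :
    HasDerivAt (deriv (L ∘ v))
      (L₂ (v x) * deriv v x * deriv v x + L₁ (v x) * deriv (deriv v) x) x := by
  rw [hv.deriv_comp_eq hL]
  exact ((hL₁ x).comp x (hv.differentiable x).hasDerivAt).mul
    (hv.differentiable_deriv x).hasDerivAt

theorem abs_deriv_comp_le (hv : HasRarefactionDecay K ε v)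
    (hL : ∀ x, HasDerivAt L (L₁ (v x)) (v x)) (hA₁ : ∀ x, |L₁ (v x)| ≤ A) (x : ℝ) :
    |deriv (L ∘ v) x| ≤ A * |deriv v x| := by
  rw [hv.deriv_comp_eq hL, abs_mul]
  exact mul_le_mul_of_nonneg_right (hA₁ x) (abs_nonneg _)

theorem abs_deriv_deriv_comp_le (hv : HasRarefactionDecay K ε v)
    (hL : ∀ x, HasDerivAt L (L₁ (v x)) (v x)) (hL₁ : ∀ x, HasDerivAt L₁ (L₂ (v x)) (v x))
    (hA₁ : ∀ x, |L₁ (v x)| ≤ A) (hA₂ : ∀ x, |L₂ (v x)| ≤ A) (x : ℝ) :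
    |deriv (deriv (L ∘ v)) x| ≤ A * (K * ε) * |deriv v x| + A * |deriv (deriv v) x| := by
  have hA : 0 ≤ A := (abs_nonneg _).trans (hA₁ x)
  calc |deriv (deriv (L ∘ v)) x|
      ≤ |L₂ (v x)| * |deriv v x| * |deriv v x| + |L₁ (v x)| * |deriv (deriv v) x| := by
        rw [(hv.hasDerivAt_deriv_comp hL hL₁ x).deriv, ← abs_mul, ← abs_mul, ← abs_mul]
        exact abs_add_le _ _
    _ ≤ A * (K * ε) * |deriv v x| + A * |deriv (deriv v) x| := by
        gcongr
        exacts [hA₂ x, hv.abs_deriv_le x, hA₁ x]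

theorem eLpNorm_deriv_deriv_comp_le (hv : HasRarefactionDecay K ε v) (hε : 0 ≤ ε)
    (hL : ∀ x, HasDerivAt L (L₁ (v x)) (v x)) (hL₁ : ∀ x, HasDerivAt L₁ (L₂ (v x)) (v x))
    (hA₁ : ∀ x, |L₁ (v x)| ≤ A) (hA₂ : ∀ x, |L₂ (v x)| ≤ A) :
    eLpNorm (deriv (deriv (L ∘ v))) 1 volume ≤ ENNReal.ofReal (A * (K + K ^ 2) * ε) := by
  have hA : 0 ≤ A := (abs_nonneg _).trans (hA₁ 0)
  have hAKε : 0 ≤ A * (K * ε) := mul_nonneg hA ((abs_nonneg _).trans (hv.abs_deriv_le 0))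
  have hquad : 0 ≤ A * (K * ε) * K := by
    rw [show A * (K * ε) * K = A * ε * K ^ 2 by ring]
    positivity
  calc eLpNorm (deriv (deriv (L ∘ v))) 1 volume
      ≤ ENNReal.ofReal (A * (K * ε)) * eLpNorm (deriv v) 1 volume
        + ENNReal.ofReal A * eLpNorm (deriv (deriv v)) 1 volume :=
        eLpNorm_le_add_of_norm_le_add (aestronglyMeasurable_deriv v volume)
          (aestronglyMeasurable_deriv (deriv v) volume) hAKε hA
          (hv.abs_deriv_deriv_comp_le hL hL₁ hA₁ hA₂) le_rfl
    _ ≤ ENNReal.ofReal (A * (K * ε)) * ENNReal.ofReal K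
        + ENNReal.ofReal A * ENNReal.ofReal (K * ε) := by
        gcongr
        exacts [hv.eLpNorm_deriv_le, hv.eLpNorm_deriv_deriv_le]
    _ = ENNReal.ofReal (A * (K + K ^ 2) * ε) := by
        rw [← ENNReal.ofReal_mul hAKε, ← ENNReal.ofReal_mul hA, ← ENNReal.ofReal_add hquad hAKε]
        congr 1
        ring

theorem comp (hv : HasRarefactionDecay K ε v) (hε₀ : 0 ≤ ε) (hε₁ : ε ≤ 1)
    (hL : ∀ x, HasDerivAt L (L₁ (v x)) (v x)) (hL₁ : ∀ x, HasDerivAt L₁ (L₂ (v x)) (v x))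
    (hA₁ : ∀ x, |L₁ (v x)| ≤ A) (hA₂ : ∀ x, |L₂ (v x)| ≤ A) :
    HasRarefactionDecay (A * (K + K ^ 2)) ε (L ∘ v) := by
  have hA : 0 ≤ A := (abs_nonneg _).trans (hA₁ 0)
  have hKε : 0 ≤ K * ε := (abs_nonneg _).trans (hv.abs_deriv_le 0)
  have hlin : A * K ≤ A * (K + K ^ 2) := by nlinarith [mul_nonneg hA (sq_nonneg K)]
  have hquad : A * (K * ε) * (K * ε) + A * (K * ε) ≤ A * (K + K ^ 2) * ε := by
    have hε : ε * ε ≤ ε := mul_le_of_le_one_left hε₀ hε₁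
    nlinarith [mul_le_mul_of_nonneg_left hε (mul_nonneg hA (sq_nonneg K))]
  refine
    { differentiable := fun x =>
        ((hL x).comp x (hv.differentiable x).hasDerivAt).differentiableAt
      differentiable_deriv := fun x => (hv.hasDerivAt_deriv_comp hL hL₁ x).differentiableAt
      abs_deriv_le := fun x => ?_
      abs_deriv_deriv_le := fun x => ?_
      eLpNorm_deriv_le := ?_
      eLpNorm_deriv_deriv_le := ?_ }
  · calc |deriv (L ∘ v) x| ≤ A * |deriv v x| := hv.abs_deriv_comp_le hL hA₁ x
      _ ≤ A * (K * ε) := by gcongr; exact hv.abs_deriv_le x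
      _ ≤ A * (K + K ^ 2) * ε := by rw [← mul_assoc]; gcongr
  · calc |deriv (deriv (L ∘ v)) x|
        ≤ A * (K * ε) * |deriv v x| + A * |deriv (deriv v) x| :=
          hv.abs_deriv_deriv_comp_le hL hL₁ hA₁ hA₂ x
      _ ≤ A * (K * ε) * (K * ε) + A * (K * ε) := by
          gcongr
          exacts [hv.abs_deriv_le x, hv.abs_deriv_deriv_le x]
      _ ≤ A * (K + K ^ 2) * ε := hquad
  · calc eLpNorm (deriv (L ∘ v)) 1 volume
        ≤ ENNReal.ofReal A * eLpNorm (deriv v) 1 volume :=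
          eLpNorm_le_mul_eLpNorm_of_ae_le_mul (ae_of_all _ (hv.abs_deriv_comp_le hL hA₁)) 1
      _ ≤ ENNReal.ofReal A * ENNReal.ofReal K := by gcongr; exact hv.eLpNorm_deriv_le
      _ = ENNReal.ofReal (A * K) := (ENNReal.ofReal_mul hA).symm
      _ ≤ ENNReal.ofReal (A * (K + K ^ 2)) := ENNReal.ofReal_le_ofReal hlin
  · exact hv.eLpNorm_deriv_deriv_comp_le hε₀ hL hL₁ hA₁ hA₂

end Comp

end HasRarefactionDecay

section Profile

theorem hasStrictDerivAt_tanh (x : ℝ) : HasStrictDerivAt tanh (1 - tanh x ^ 2) x := by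
  have hcosh := (cosh_pos x).ne'
  have h := (hasStrictDerivAt_sinh x).fun_div (hasStrictDerivAt_cosh x) hcosh
  simp_rw [← tanh_eq_sinh_div_cosh] at h
  refine h.congr_deriv ?_
  rw [tanh_eq_sinh_div_cosh]
  field_simp

theorem hasDerivAt_mul_abs (x : ℝ) : HasDerivAt (fun y => y * |y|) (2 * |x|) x := by
  refine hasDerivAt_of_hasDerivAt_of_ne' (f := fun y : ℝ => y * |y|) (g := fun y => 2 * |y|)
    (x := 0) (fun y hy => ?_) (by fun_prop) (by fun_prop) x
  refine ((hasDerivAt_id y).mul (hasDerivAt_abs hy)).congr_deriv ?_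
  rw [id, self_mul_sign]
  ring

/-- If `w₀ ∘ Y` is the Burgers solution with datum `w₀`, then `Y` maps `x` to the foot of the
characteristic through `(t, x)`. -/
theorem hasDerivAt_characteristicFoot {w₀ w₀' : ℝ → ℝ} (hw₀ : ∀ y, HasStrictDerivAt w₀ (w₀' y) y)
    (hw₀' : ∀ y, 0 ≤ w₀' y) {t : ℝ} (ht : 0 ≤ t) {Y : ℝ → ℝ} (hY : ∀ x, Y x + t * w₀ (Y x) = x)
    (x : ℝ) : HasDerivAt Y (1 + t * w₀' (Y x))⁻¹ x := by
  set φ : ℝ → ℝ := fun y => y + t * w₀ y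
  have hφ_deriv (y : ℝ) : HasStrictDerivAt φ (1 + t * w₀' y) y :=
    (hasStrictDerivAt_id y).add ((hw₀ y).const_mul t)
  have hφ_pos (y : ℝ) : 0 < 1 + t * w₀' y := by have := mul_nonneg ht (hw₀' y); linarith
  have hφ_mono : StrictMono φ :=
    strictMono_of_hasDerivAt_pos (fun y => (hφ_deriv y).hasDerivAt) hφ_pos
  have hleft (y : ℝ) : Y (φ y) = y := hφ_mono.injective (hY (φ y))
  have hφY : φ (Y x) = x := hY x
  simpa only [hφY] using ((hφ_deriv (Y x)).to_local_left_inverse (hφ_pos (Y x)).ne'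
    (Eventually.of_forall hleft)).hasDerivAt

/-- The right-hand side of the equation `s' = profileSlope k s` satisfied by the normalised wave
`s = tanh ∘ Y`, where `k` is the time multiplied by the slope of the datum at the origin. -/
noncomputable def profileSlope (k z : ℝ) : ℝ := (1 - z ^ 2) / (1 + k * (1 - z ^ 2))

/-- The primitive of `|∂profileSlope k / ∂z|` that vanishes at `0`; along the normalised wave it
measures the total variation of `s'`. -/
noncomputable def profileVariation (k z : ℝ) : ℝ :=
  z * |z| / ((1 + k) * (1 + k * (1 - z ^ 2)))

variable {k z : ℝ}

theorem one_le_profile_denom (hk : 0 ≤ k) (hz : |z| ≤ 1) : 1 ≤ 1 + k * (1 - z ^ 2) :=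
  le_add_of_nonneg_right (mul_nonneg hk (sub_nonneg.mpr ((sq_le_one_iff_abs_le_one z).mpr hz)))

theorem profileSlope_nonneg (hk : 0 ≤ k) (hz : |z| ≤ 1) : 0 ≤ profileSlope k z :=
  div_nonneg (sub_nonneg.mpr ((sq_le_one_iff_abs_le_one z).mpr hz))
    (one_pos.le.trans (one_le_profile_denom hk hz))

theorem profileSlope_le (hk : 0 ≤ k) (hz : |z| ≤ 1) : profileSlope k z ≤ (1 + k)⁻¹ := by
  have hden := one_pos.trans_le (one_le_profile_denom hk hz)
  rw [profileSlope, inv_eq_one_div, div_le_div_iff₀ hden (by positivity)]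
  nlinarith [sq_nonneg z]

theorem hasDerivAt_profileSlope (hk : 0 ≤ k) (hz : |z| ≤ 1) :
    HasDerivAt (profileSlope k) (-(2 * z) / (1 + k * (1 - z ^ 2)) ^ 2) z := by
  have hden := (one_pos.trans_le (one_le_profile_denom hk hz)).ne'
  have hnum : HasDerivAt (fun y : ℝ => 1 - y ^ 2) (-(2 * z)) z := by
    simpa using (hasDerivAt_pow 2 z).const_sub 1
  refine (hnum.div ((hnum.const_mul k).const_add 1) hden).congr_deriv ?_
  ring

theorem hasDerivAt_profileVariation (hk : 0 ≤ k) (hz : |z| ≤ 1) :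
    HasDerivAt (profileVariation k) (2 * |z| / (1 + k * (1 - z ^ 2)) ^ 2) z := by
  have hden := (one_pos.trans_le (one_le_profile_denom hk hz)).ne'
  have hk₁ : 1 + k ≠ 0 := by positivity
  have hsq : HasDerivAt (fun y : ℝ => 1 - y ^ 2) (-(2 * z)) z := by
    simpa using (hasDerivAt_pow 2 z).const_sub 1
  refine ((hasDerivAt_mul_abs z).div (((hsq.const_mul k).const_add 1).const_mul (1 + k))
    (mul_ne_zero hk₁ hden)).congr_deriv ?_
  field_simp
  ring

theorem abs_profileVariation_le (hk : 0 ≤ k) (hz : |z| ≤ 1) :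
    |profileVariation k z| ≤ (1 + k)⁻¹ := by
  have hden := one_le_profile_denom hk hz
  have hk₁ : 0 < 1 + k := by positivity
  rw [profileVariation, abs_div, abs_mul, abs_abs, abs_of_pos (by positivity : 0 < (1 + k) * _),
    div_le_iff₀ (by positivity), inv_mul_cancel_left₀ hk₁.ne']
  exact (mul_le_one₀ hz (abs_nonneg z) hz).trans hden

theorem hasRarefactionDecay_of_deriv_eq_profileSlope (hk : 0 ≤ k) {s : ℝ → ℝ}
    (hs : ∀ x, |s x| ≤ 1) (hs' : ∀ x, HasDerivAt s (profileSlope k (s x)) x) :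
    HasRarefactionDecay 2 (1 + k)⁻¹ s := by
  set D : ℝ → ℝ := fun x => (1 + k * (1 - s x ^ 2)) ^ 2
  have hD_le (x : ℝ) : 1 ≤ D x := one_le_pow₀ (one_le_profile_denom hk (hs x))
  have hslope₀ (x : ℝ) : 0 ≤ profileSlope k (s x) := profileSlope_nonneg hk (hs x)
  have hslope (x : ℝ) : profileSlope k (s x) ≤ (1 + k)⁻¹ := profileSlope_le hk (hs x)
  have hε : 0 ≤ (1 + k)⁻¹ := (hslope₀ 0).trans (hslope 0)
  have hderiv : deriv s = fun x => profileSlope k (s x) := funext fun x => (hs' x).deriv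
  have hs'' (x : ℝ) : HasDerivAt (deriv s) (-(2 * s x) / D x * profileSlope k (s x)) x := by
    rw [hderiv]
    exact (hasDerivAt_profileSlope hk (hs x)).comp x (hs' x)
  have habs (x : ℝ) : |deriv (deriv s) x| = 2 * |s x| / D x * profileSlope k (s x) := by
    rw [(hs'' x).deriv, abs_mul, abs_div, abs_neg, abs_mul, abs_two,
      abs_of_pos (one_pos.trans_le (hD_le x)), abs_of_nonneg (hslope₀ x)]
  refine
    { differentiable := fun x => (hs' x).differentiableAt
      differentiable_deriv := fun x => (hs'' x).differentiableAt
      abs_deriv_le := fun x => ?_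
      abs_deriv_deriv_le := fun x => ?_
      eLpNorm_deriv_le := ?_
      eLpNorm_deriv_deriv_le := ?_ }
  · rw [(hs' x).deriv, abs_of_nonneg (hslope₀ x)]
    linarith [hslope x]
  · rw [habs]
    have hratio : 2 * |s x| / D x ≤ 2 :=
      (div_le_self (by positivity) (hD_le x)).trans (by linarith [hs x])
    exact mul_le_mul hratio (hslope x) (hslope₀ x) two_pos.le
  · simpa using eLpNorm_one_le_of_norm_le_deriv (g := deriv s) hs'
      (fun x => by rw [(hs' x).deriv, norm_of_nonneg (hslope₀ x)]) hs
  · exact eLpNorm_one_le_of_norm_le_deriv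
      (fun x => (hasDerivAt_profileVariation hk (hs x)).comp x (hs' x)) (fun x => (habs x).le)
      (fun x => abs_profileVariation_le hk (hs x))

end Profile

section Burgers

variable {wm wp : ℝ}

theorem w0_mem_Ioo (h : wm < wp) (x : ℝ) : w0 wm wp x ∈ Ioo wm wp := by
  have hlower := neg_one_lt_tanh x
  have hupper := tanh_lt_one x
  constructor <;> unfold w0 <;> nlinarith

theorem hasStrictDerivAt_w0 (x : ℝ) :
    HasStrictDerivAt (w0 wm wp) ((wp - wm) / 2 * (1 - tanh x ^ 2)) x :=
  ((hasStrictDerivAt_tanh x).const_mul _).const_add _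

theorem hasDerivAt_tanh_characteristicFoot (h : wm ≤ wp) {t : ℝ} (ht : 0 ≤ t) {Y : ℝ → ℝ}
    (hY : ∀ x, Y x + t * w0 wm wp (Y x) = x) (x : ℝ) :
    HasDerivAt (fun x => tanh (Y x)) (profileSlope (t * ((wp - wm) / 2)) (tanh (Y x))) x := by
  have hw0' (y : ℝ) : 0 ≤ (wp - wm) / 2 * (1 - tanh y ^ 2) :=
    mul_nonneg (by linarith) (sub_nonneg.mpr (tanh_sq_lt_one y).le)
  have hfoot := hasDerivAt_characteristicFoot hasStrictDerivAt_w0 hw0' ht hY x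
  refine ((hasStrictDerivAt_tanh (Y x)).hasDerivAt.comp x hfoot).congr_deriv ?_
  rw [profileSlope, mul_assoc t]
  exact (div_eq_mul_inv _ _).symm

theorem hasRarefactionDecay_w0 (h : wm ≤ wp) {t : ℝ} (ht : 0 ≤ t) {Y : ℝ → ℝ}
    (hY : ∀ x, Y x + t * w0 wm wp (Y x) = x) :
    HasRarefactionDecay (6 * ((wp - wm) / 2 + 1)) (1 + t)⁻¹ (fun x => w0 wm wp (Y x)) := by
  have ha : 0 ≤ (wp - wm) / 2 := by linarith
  set a := (wp - wm) / 2
  have hk : 0 ≤ t * a := mul_nonneg ht ha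
  have hs : HasRarefactionDecay 2 (1 + t * a)⁻¹ (fun x => tanh (Y x)) :=
    hasRarefactionDecay_of_deriv_eq_profileSlope hk (fun x => (abs_tanh_lt_one _).le)
      (hasDerivAt_tanh_characteristicFoot h ht hY)
  have hw : HasRarefactionDecay (a * (2 + 2 ^ 2)) (1 + t * a)⁻¹ (fun x => w0 wm wp (Y x)) :=
    hs.comp (L := fun z => (wm + wp) / 2 + a * z) (L₁ := fun _ => a) (L₂ := fun _ => 0)
      (by positivity) (inv_le_one_of_one_le₀ (by linarith))
      (fun x => (((hasDerivAt_id _).const_mul a).const_add _).congr_deriv (mul_one a))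
      (fun x => hasDerivAt_const _ _) (fun _ => (abs_of_nonneg ha).le) (fun _ => by simpa using ha)
  refine hw.mono (by linarith) ?_
  rw [← div_eq_mul_inv, ← div_eq_mul_inv, div_le_div_iff₀ (by positivity) (by positivity)]
  nlinarith [mul_nonneg hk ha]

end Burgers

section LeftInverse

variable {g G : ℝ → ℝ} {a b : ℝ}

theorem exists_mem_Ioo_eq_of_leftInvOn (hab : a ≤ b) (hg : ContinuousOn g (Icc a b))
    (hG : LeftInvOn G g (Icc a b)) {v : ℝ} (hv : v ∈ Ioo (g a) (g b)) :
    G v ∈ Ioo a b ∧ g (G v) = v := by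
  obtain ⟨u, hu, rfl⟩ := intermediate_value_Ioo hab hg hv
  rw [hG (Ioo_subset_Icc_self hu)]
  exact ⟨hu, rfl⟩

theorem hasDerivAt_of_leftInvOn (hG : LeftInvOn G g (Icc a b)) {u g' : ℝ} (hu : u ∈ Ioo a b)
    (hg : HasStrictDerivAt g g' u) (hg' : g' ≠ 0) : HasDerivAt G g'⁻¹ (g u) :=
  (hg.to_local_left_inverse hg' <|
    mem_of_superset (Icc_mem_nhds hu.1 hu.2) fun _ hy => hG hy).hasDerivAt

theorem exists_bound_derivs_of_leftInvOn (hab : a ≤ b) (hg : ContDiff ℝ 2 g)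
    (hpos : ∀ u ∈ Icc a b, 0 < deriv g u) (hG : LeftInvOn G g (Icc a b)) :
    ∃ A > 0, ∃ G₁ G₂ : ℝ → ℝ, ∀ v ∈ Ioo (g a) (g b),
      HasDerivAt G (G₁ v) v ∧ HasDerivAt G₁ (G₂ v) v ∧ |G₁ v| ≤ A ∧ |G₂ v| ≤ A := by
  have hg₁ : ContDiff ℝ 1 (deriv g) := ContDiff.deriv' hg
  have hne : ∀ u ∈ Icc a b, deriv g u ≠ 0 := fun u hu => (hpos u hu).ne'
  obtain ⟨A₁, hA₁⟩ := isCompact_Icc.exists_bound_of_continuousOn (f := fun u => (deriv g u)⁻¹)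
    (hg₁.continuous.continuousOn.inv₀ hne)
  obtain ⟨A₂, hA₂⟩ := isCompact_Icc.exists_bound_of_continuousOn
    (f := fun u => -deriv (deriv g) u / deriv g u ^ 2 * (deriv g u)⁻¹)
    (((hg₁.continuous_deriv le_rfl).neg.continuousOn.div (hg₁.continuous.pow 2).continuousOn
      fun u hu => pow_ne_zero 2 (hne u hu)).mul (hg₁.continuous.continuousOn.inv₀ hne))
  refine ⟨max 1 (max A₁ A₂), by positivity, fun v => (deriv g (G v))⁻¹,
    fun v => -deriv (deriv g) (G v) / deriv g (G v) ^ 2 * (deriv g (G v))⁻¹, fun v hv => ?_⟩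
  obtain ⟨hu, hgG⟩ := exists_mem_Ioo_eq_of_leftInvOn hab hg.continuous.continuousOn hG hv
  have hu' := Ioo_subset_Icc_self hu
  have hG₁ : HasDerivAt G (deriv g (G v))⁻¹ v := by
    simpa only [hgG] using
      hasDerivAt_of_leftInvOn hG hu (hg.hasStrictDerivAt two_ne_zero) (hne _ hu')
  have hg₂ : HasDerivAt (deriv g) (deriv (deriv g) (G v)) (G v) :=
    (hg₁.differentiable one_ne_zero _).hasDerivAt
  exact ⟨hG₁, (hg₂.fun_inv (hne _ hu')).comp v hG₁,
    (hA₁ _ hu').trans ((le_max_left _ _).trans (le_max_right _ _)),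
    (hA₂ _ hu').trans ((le_max_right _ _).trans (le_max_right _ _))⟩

theorem exists_hasRarefactionDecay_leftInverse_w0 (hab : a < b) (hg : ContDiff ℝ 2 g)
    (hpos : ∀ u ∈ Icc a b, 0 < deriv g u) (hG : LeftInvOn G g (Icc a b)) :
    ∃ K > 0, ∀ t : ℝ, 0 ≤ t → ∀ Y : ℝ → ℝ, (∀ x, Y x + t * w0 (g a) (g b) (Y x) = x) →
      HasRarefactionDecay K (1 + t)⁻¹ (fun x => G (w0 (g a) (g b) (Y x))) := by
  have hg_lt : g a < g b :=
    strictMonoOn_of_deriv_pos (convex_Icc a b) hg.continuous.continuousOn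
      (fun u hu => hpos u (interior_subset hu)) (left_mem_Icc.mpr hab.le)
      (right_mem_Icc.mpr hab.le) hab
  obtain ⟨A, hA, G₁, G₂, hbound⟩ := exists_bound_derivs_of_leftInvOn hab.le hg hpos hG
  have hB : 0 < 6 * ((g b - g a) / 2 + 1) := by linarith
  set B := 6 * ((g b - g a) / 2 + 1)
  refine ⟨A * (B + B ^ 2), by positivity, fun t ht Y hY => ?_⟩
  have hw (x : ℝ) := hbound (w0 (g a) (g b) (Y x)) (w0_mem_Ioo hg_lt (Y x))
  exact (hasRarefactionDecay_w0 hg_lt.le ht hY).comp (by positivity)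
    (inv_le_one_of_one_le₀ (by linarith)) (fun x => (hw x).1) (fun x => (hw x).2.1)
    (fun x => (hw x).2.2.1) (fun x => (hw x).2.2.2)

end LeftInverse

theorem stmt_5 (um up : ℝ) (hu : um < up)
    (f : ℝ → ℝ) (hf : ContDiff ℝ 3 f)
    (hconv : ∀ u ∈ Set.Icc um up, 0 < deriv (deriv f) u)
    (linv : ℝ → ℝ) (hlinv : ∀ u ∈ Set.Icc um up, linv (deriv f u) = u)
    (Y : ℝ → ℝ → ℝ)
    (hY : ∀ t x : ℝ, 0 ≤ t → Y t x + t * w0 (deriv f um) (deriv f up) (Y t x) = x) :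
    let Ur : ℝ → ℝ → ℝ := fun t x => linv (w0 (deriv f um) (deriv f up) (Y t x))
    (∀ q : ℝ, 1 ≤ q → ∃ C : ℝ, 0 < C ∧ ∀ t : ℝ, 0 ≤ t →
      eLpNorm (fun x => deriv (fun y => Ur t y) x) (ENNReal.ofReal q) volume
        ≤ ENNReal.ofReal (C * (1 + t) ^ (-1 + 1/q)) ∧
      eLpNorm (fun x => deriv (deriv (fun y => Ur t y)) x) (ENNReal.ofReal q) volume
        ≤ ENNReal.ofReal (C * (1 + t) ^ (-(1:ℝ)))) ∧
    (∃ C : ℝ, 0 < C ∧ ∀ t : ℝ, 0 ≤ t → ∀ x : ℝ,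
      |deriv (fun y => Ur t y) x| ≤ C * (1 + t) ^ (-(1:ℝ)) ∧
      |deriv (deriv (fun y => Ur t y)) x| ≤ C * (1 + t) ^ (-(1:ℝ))) := by
  intro Ur
  have hf' : ContDiff ℝ 2 (deriv f) := ContDiff.deriv' hf
  obtain ⟨K, hK, hdecay⟩ := exists_hasRarefactionDecay_leftInverse_w0 hu hf' hconv hlinv
  have hUr (t : ℝ) (ht : 0 ≤ t) : HasRarefactionDecay K (1 + t)⁻¹ (Ur t) :=
    hdecay t ht (Y t) fun x => hY t x ht
  refine ⟨fun q hq => ⟨K, hK, fun t ht => ?_⟩, K, hK, fun t ht x => ?_⟩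
  · have ht₁ : 0 < 1 + t := by positivity
    exact ⟨(hUr t ht).eLpNorm_deriv_le_rpow ht₁ hq,
      (hUr t ht).eLpNorm_deriv_deriv_le_rpow ht₁ hq⟩
  · rw [rpow_neg_one]
    exact ⟨(hUr t ht).abs_deriv_le x, (hUr t ht).abs_deriv_deriv_le x⟩
end

section
/- Define F̃_p(U,U^r)(t,x) := −(f′(U(t,x)+U^r(t,x)) − f′(U^r(t,x)))·∂_x U^r(t,x) − f′(U(t,x)+U^r(t,x))·∂_x U(t,x). Then both: (a) ∫₀^∞ ( ∫_ℝ |F̃_p(U,U^r)(t,x)| dx )^{(3p+1)/(3p)} dt < ∞, and (b) ∫₀^∞ ∫_ℝ (∂_x U(t,x) + ∂_x U^r(t,x))^{p−1} (∂_x U^r(t,x))² dx dt < ∞. -/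
open Real MeasureTheory Filter Set

/-- The Barenblatt-type profile `v(t,x) = t^{-1/(p+1)} (max(A - B(x t^{-1/(p+1)})², 0))^{1/(p-1)}`,
the spatial derivative of the contact wave for `p`-Laplacian type viscosity. -/
noncomputable def vfun (p A B t x : ℝ) : ℝ :=
  t ^ (-(1:ℝ)/(p+1)) * (max (A - B * (x * t ^ (-(1:ℝ)/(p+1)))^2) 0) ^ ((1:ℝ)/(p-1))

/-!
The contact wave `U` is nonpositive and increasing, and it vanishes to the right of a point `X` of
order `(1 + t) ^ (1 / (p + 1))`. The interaction therefore lives on `x < X`, where, since `f'`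
increases, it is dominated by the derivative of `f ∘ Uʳ + f ∘ (U + Uʳ(X))`; its `L¹` norm is at most
`2 f(Uʳ(X))`. Uniform convexity bounds `f(Uʳ(X))` by a multiple of `f'(Uʳ(X))²`, and the equation of
the characteristic through `X` gives `f'(Uʳ(X))² = O(1 / (1 + t))`, because `X = O(√(1 + t))` and
the left tail of the Burgers datum is `O(1 / |y|)`. Any power larger than one of this rate is
integrable in time.

For the second integral, `∂ₓU = O((1 + t) ^ (-1 / (p + 1)))` and `∂ₓUʳ = O(1 / (1 + t))`, while the
remaining factor `∂ₓUʳ` integrates to at most `u₊`; the resulting rate is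
`(1 + t) ^ (-(1 + (p - 1) / (p + 1)))`.
-/

lemma setLIntegral_deriv_le_of_mapsTo_Icc {s : Set ℝ} {G G' : ℝ → ℝ} {m M : ℝ}
    (hs : MeasurableSet s) (hG : ∀ x ∈ s, HasDerivAt G (G' x) x) (hmono : MonotoneOn G s)
    (hmaps : MapsTo G s (Icc m M)) :
    ∫⁻ x in s, ENNReal.ofReal (G' x) ≤ ENNReal.ofReal (M - m) := by
  rw [lintegral_deriv_eq_volume_image_of_monotoneOn hs
    (fun x hx ↦ (hG x hx).hasDerivWithinAt) hmono, ← Real.volume_Icc]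
  exact measure_mono hmaps.image_subset

lemma setLIntegral_Ioi_lt_top_of_le_rpow {Φ : ℝ → ENNReal} {κ s : ℝ} (hs : 1 < s)
    (hΦ : ∀ t, 0 ≤ t → Φ t ≤ ENNReal.ofReal (κ * (1 + t) ^ (-s))) :
    ∫⁻ t in Ioi 0, Φ t < ⊤ := by
  have hint : IntegrableOn (fun t : ℝ ↦ κ * (t + 1) ^ (-s)) (Ioi 0) :=
    (integrableOn_add_rpow_Ioi_of_lt (neg_lt_neg hs) (by norm_num)).const_mul κ
  refine (setLIntegral_mono' measurableSet_Ioi fun t ht ↦ ?_).trans_lt hint.lintegral_lt_top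
  rw [add_comm t 1]
  exact hΦ t (le_of_lt ht)

lemma setLIntegral_Ioi_rpow_lt_top_of_le_div {Φ : ℝ → ENNReal} {κ r : ℝ} (hr : 1 < r)
    (hΦ : ∀ t, 0 ≤ t → Φ t ≤ ENNReal.ofReal (κ / (1 + t))) :
    ∫⁻ t in Ioi 0, Φ t ^ r < ⊤ := by
  refine setLIntegral_Ioi_lt_top_of_le_rpow (κ := max κ 0 ^ r) hr fun t ht ↦ ?_
  have hT : 0 ≤ 1 + t := by positivity
  have hκ : 0 ≤ max κ 0 / (1 + t) := div_nonneg (le_max_right _ _) hT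
  calc Φ t ^ r ≤ ENNReal.ofReal (max κ 0 / (1 + t)) ^ r :=
        ENNReal.rpow_le_rpow ((hΦ t ht).trans (ENNReal.ofReal_le_ofReal
          (div_le_div_of_nonneg_right (le_max_left _ _) hT))) (by linarith)
    _ = ENNReal.ofReal (max κ 0 ^ r * (1 + t) ^ (-r)) := by
        rw [ENNReal.ofReal_rpow_of_nonneg hκ (by linarith), div_rpow (le_max_right _ _) hT,
          div_eq_mul_inv, rpow_neg hT]

lemma mem_Ioo_and_apply_eq_of_leftInvOn {φ ψ : ℝ → ℝ} {a b r : ℝ} (hab : a ≤ b)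
    (hφ : ContinuousOn φ (Icc a b)) (hψ : LeftInvOn ψ φ (Icc a b)) (hr : r ∈ Ioo (φ a) (φ b)) :
    ψ r ∈ Ioo a b ∧ φ (ψ r) = r := by
  obtain ⟨u, hu, rfl⟩ := intermediate_value_Ioo hab hφ hr
  rw [hψ (Ioo_subset_Icc_self hu)]
  exact ⟨hu, rfl⟩

lemma hasDerivAt_of_leftInvOn_s8 {φ ψ : ℝ → ℝ} {a b d r : ℝ} (hab : a ≤ b)
    (hφ : ContinuousOn φ (Icc a b)) (hmono : StrictMonoOn φ (Icc a b))
    (hψ : LeftInvOn ψ φ (Icc a b)) (hr : r ∈ Ioo (φ a) (φ b)) (hd : HasDerivAt φ d (ψ r))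
    (hd₀ : d ≠ 0) : HasDerivAt ψ d⁻¹ r := by
  have hsection := fun {s} ↦ mem_Ioo_and_apply_eq_of_leftInvOn (r := s) hab hφ hψ
  have hψmono : StrictMonoOn ψ (Ioo (φ a) (φ b)) := fun s hs s' hs' hss' ↦ by
    rw [← hmono.lt_iff_lt (Ioo_subset_Icc_self (hsection hs).1)
      (Ioo_subset_Icc_self (hsection hs').1), (hsection hs).2, (hsection hs').2]
    exact hss'
  have himage : ψ '' Ioo (φ a) (φ b) = Ioo a b := by
    rw [← hφ.image_Ioo_of_strictMonoOn hab hmono, (hψ.mono Ioo_subset_Icc_self).image_image]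
  have hcont : ContinuousAt ψ r := hψmono.continuousAt_of_image_mem_nhds (Ioo_mem_nhds hr.1 hr.2)
    (himage ▸ Ioo_mem_nhds (hsection hr).1.1 (hsection hr).1.2)
  refine hd.of_local_left_inverse hcont hd₀ ?_
  filter_upwards [Ioo_mem_nhds hr.1 hr.2] with s hs using (hsection hs).2

/-- A flux that vanishes on `(-∞, 0]` and is uniformly convex with modulus `c` on `[0, up]`; only
the derivative of the flux, not its second derivative, has to be continuous. -/
structure IsDegenerateConvexFlux (c up : ℝ) (f : ℝ → ℝ) : Prop where
  modulus_pos : 0 < c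
  up_pos : 0 < up
  contDiff : ContDiff ℝ 1 f
  eq_zero : ∀ u ≤ 0, f u = 0
  differentiableAt_deriv : ∀ u ∈ Ioo 0 up, DifferentiableAt ℝ (deriv f) u
  le_deriv_deriv : ∀ u ∈ Ioo 0 up, c ≤ deriv (deriv f) u

lemma exists_isDegenerateConvexFlux {up : ℝ} {f : ℝ → ℝ} (hup : 0 < up) (hf : ContDiff ℝ 1 f)
    (hf₂ : ContDiffOn ℝ 2 f (Ici 0)) (hf₀ : ∀ u ≤ 0, f u = 0)
    (hconv : ∀ u ∈ Icc 0 up, 0 < derivWithin (derivWithin f (Ici 0)) (Ici 0) u) :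
    ∃ c, IsDegenerateConvexFlux c up f := by
  have hud : UniqueDiffOn ℝ (Ici (0 : ℝ)) := uniqueDiffOn_Ici 0
  have hC1 : ContDiffOn ℝ 1 (derivWithin f (Ici 0)) (Ici 0) := hf₂.derivWithin hud (by norm_num)
  have hC0 : ContinuousOn (derivWithin (derivWithin f (Ici 0)) (Ici 0)) (Ici 0) :=
    (hC1.derivWithin (m := 0) hud (by norm_num)).continuousOn
  have hderiv : ∀ u ∈ Ioo 0 up,
      HasDerivAt (deriv f) (derivWithin (derivWithin f (Ici 0)) (Ici 0) u) u := fun u hu ↦ by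
    have hnhds : Ici 0 ∈ nhds u := Ici_mem_nhds hu.1
    refine (((hC1.differentiableOn one_ne_zero u hu.1.le).hasDerivWithinAt).hasDerivAt
      hnhds).congr_of_eventuallyEq ?_
    filter_upwards [hnhds] with z hz
    exact ((hf.differentiable one_ne_zero z).derivWithin (hud z hz)).symm
  obtain ⟨u₀, hu₀, hmin⟩ := isCompact_Icc.exists_isMinOn (nonempty_Icc.2 hup.le)
    (hC0.mono (Icc_subset_Ici_self : Icc 0 up ⊆ Ici 0))
  exact ⟨_, hconv u₀ hu₀, hup, hf, hf₀, fun u hu ↦ (hderiv u hu).differentiableAt,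
    fun u hu ↦ (hderiv u hu).deriv.symm ▸ hmin (Ioo_subset_Icc_self hu)⟩

namespace IsDegenerateConvexFlux

variable {c up u v : ℝ} {f : ℝ → ℝ}

lemma differentiable (hf : IsDegenerateConvexFlux c up f) : Differentiable ℝ f :=
  hf.contDiff.differentiable one_ne_zero

lemma continuous_deriv (hf : IsDegenerateConvexFlux c up f) : Continuous (deriv f) :=
  hf.contDiff.continuous_deriv le_rfl

lemma deriv_eq_zero (hf : IsDegenerateConvexFlux c up f) (hu : u ≤ 0) : deriv f u = 0 := by
  have hleft : EqOn (deriv f) 0 (Iio 0) := fun z hz ↦ by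
    have : f =ᶠ[nhds z] fun _ ↦ 0 := by
      filter_upwards [Iio_mem_nhds hz] with y hy using hf.eq_zero y (le_of_lt hy)
    simp [this.deriv_eq]
  exact hleft.of_subset_closure hf.continuous_deriv.continuousOn continuousOn_const
    Iio_subset_Iic_self (closure_Iio (0 : ℝ)).superset hu

lemma mul_sub_le_deriv_sub (hf : IsDegenerateConvexFlux c up f) (hu : 0 ≤ u) (huv : u ≤ v)
    (hv : v ≤ up) : c * (v - u) ≤ deriv f v - deriv f u := by
  refine (convex_Icc 0 up).mul_sub_le_image_sub_of_le_deriv hf.continuous_deriv.continuousOn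
    ?_ ?_ u ⟨hu, huv.trans hv⟩ v ⟨hu.trans huv, hv⟩ huv
  all_goals rw [interior_Icc]
  · exact fun x hx ↦ (hf.differentiableAt_deriv x hx).differentiableWithinAt
  · exact hf.le_deriv_deriv

lemma strictMonoOn_deriv (hf : IsDegenerateConvexFlux c up f) :
    StrictMonoOn (deriv f) (Icc 0 up) := fun u hu v hv huv ↦ by
  have := hf.mul_sub_le_deriv_sub hu.1 huv.le hv.2
  linarith [mul_pos hf.modulus_pos (sub_pos.2 huv)]

lemma monotoneOn_deriv (hf : IsDegenerateConvexFlux c up f) : MonotoneOn (deriv f) (Iic up) := by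
  have hleft : MonotoneOn (deriv f) (Iic 0) := fun u hu v hv _ ↦ by
    rw [hf.deriv_eq_zero hu, hf.deriv_eq_zero hv]
  simpa only [Iic_union_Icc_eq_Iic hf.up_pos.le] using
    hleft.union_right hf.strictMonoOn_deriv.monotoneOn isGreatest_Iic (isLeast_Icc hf.up_pos.le)

lemma deriv_nonneg (hf : IsDegenerateConvexFlux c up f) (hu : u ≤ up) : 0 ≤ deriv f u := by
  rw [← hf.deriv_eq_zero (min_le_right u 0)]
  exact hf.monotoneOn_deriv ((min_le_left u 0).trans hu) hu (min_le_left u 0)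

lemma deriv_up_pos (hf : IsDegenerateConvexFlux c up f) : 0 < deriv f up := by
  rw [← hf.deriv_eq_zero le_rfl]
  exact hf.strictMonoOn_deriv (left_mem_Icc.2 hf.up_pos.le) (right_mem_Icc.2 hf.up_pos.le) hf.up_pos

lemma monotoneOn (hf : IsDegenerateConvexFlux c up f) : MonotoneOn f (Iic up) :=
  monotoneOn_of_deriv_nonneg (convex_Iic up) hf.contDiff.continuous.continuousOn
    hf.differentiable.differentiableOn fun u hu ↦ hf.deriv_nonneg (interior_subset hu : u ∈ Iic up)

lemma nonneg (hf : IsDegenerateConvexFlux c up f) (hu : u ≤ up) : 0 ≤ f u := by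
  rw [← hf.eq_zero _ (min_le_right u 0)]
  exact hf.monotoneOn ((min_le_left u 0).trans hu) hu (min_le_left u 0)

lemma le_deriv_sq_div (hf : IsDegenerateConvexFlux c up f) (hu : u ∈ Icc 0 up) :
    f u ≤ deriv f u ^ 2 / c := by
  have hchord : f u ≤ deriv f u * u := by
    have := (convex_Icc 0 u).image_sub_le_mul_sub_of_deriv_le
      hf.contDiff.continuous.continuousOn hf.differentiable.differentiableOn
      (fun x hx ↦ hf.monotoneOn_deriv ((interior_subset hx).2.trans hu.2) hu.2
        (interior_subset hx).2) 0 (left_mem_Icc.2 hu.1) u (right_mem_Icc.2 hu.1) hu.1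
    simpa only [hf.eq_zero 0 le_rfl, sub_zero] using this
  have hslope : c * u ≤ deriv f u := by
    simpa only [hf.deriv_eq_zero le_rfl, sub_zero] using
      hf.mul_sub_le_deriv_sub le_rfl hu.1 hu.2
  rw [le_div_iff₀ hf.modulus_pos]
  calc f u * c ≤ deriv f u * u * c := mul_le_mul_of_nonneg_right hchord hf.modulus_pos.le
    _ = deriv f u * (c * u) := by ring
    _ ≤ deriv f u ^ 2 := by
      rw [sq]
      exact mul_le_mul_of_nonneg_left hslope (hf.deriv_nonneg hu.2)

end IsDegenerateConvexFlux

lemma hasDerivAt_tanh (x : ℝ) : HasDerivAt tanh (1 - tanh x ^ 2) x := by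
  have hcosh : cosh x ≠ 0 := (cosh_pos x).ne'
  have hquot := (hasDerivAt_sinh x).div (hasDerivAt_cosh x) hcosh
  rw [show sinh / cosh = tanh from funext fun y ↦ (tanh_eq_sinh_div_cosh y).symm] at hquot
  refine hquot.congr_deriv ?_
  rw [tanh_eq_sinh_div_cosh]
  field_simp

lemma one_add_tanh_eq (x : ℝ) : 1 + tanh x = 2 / (1 + exp (-(2 * x))) := by
  rw [tanh_eq, show exp (-(2 * x)) = exp (-x) / exp x by rw [← exp_sub]; ring_nf]
  field_simp
  ring

/-- An increasing profile with values in `(0, L)`, slope at most `K`, and left tail `O(1/|y|)` with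
constant `C`: the Burgers data for which the approximate rarefaction wave decays fast enough. -/
structure IsRarefactionDatum (L K C : ℝ) (g : ℝ → ℝ) : Prop where
  differentiable : Differentiable ℝ g
  mem_Ioo : ∀ y, g y ∈ Ioo 0 L
  deriv_mem_Icc : ∀ y, deriv g y ∈ Icc 0 K
  neg_mul_le : ∀ y, -y * g y ≤ C

lemma isRarefactionDatum_w0 {L : ℝ} (hL : 0 < L) :
    IsRarefactionDatum L (L / 2) (L / 2) (w0 0 L) := by
  have hw0 : w0 0 L = fun y ↦ L / 2 + L / 2 * tanh y := by
    funext y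
    simp only [w0, zero_add, sub_zero]
  have hderiv (y : ℝ) : HasDerivAt (w0 0 L) (L / 2 * (1 - tanh y ^ 2)) y :=
    hw0 ▸ ((hasDerivAt_tanh y).const_mul (L / 2)).const_add (L / 2)
  refine ⟨fun y ↦ (hderiv y).differentiableAt, fun y ↦ ?_, fun y ↦ ?_, fun y ↦ ?_⟩
  · rw [hw0, mem_Ioo]
    constructor <;> nlinarith [tanh_lt_one y, neg_one_lt_tanh y]
  · rw [(hderiv y).deriv, mem_Icc]
    constructor <;> nlinarith [tanh_sq_lt_one y, sq_nonneg (tanh y)]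
  · have htail : -y * (1 + tanh y) ≤ 1 := by
      rw [one_add_tanh_eq, mul_div_assoc', div_le_one (by positivity)]
      linarith [add_one_le_exp (-(2 * y))]
    calc -y * w0 0 L y = L / 2 * (-y * (1 + tanh y)) := by rw [hw0]; ring
      _ ≤ L / 2 := mul_le_of_le_one_right (by positivity) htail

section Characteristics

variable {L K C t : ℝ} {g y : ℝ → ℝ}

lemma strictMono_characteristic (hg : Monotone g) (ht : 0 ≤ t) :
    StrictMono fun z ↦ z + t * g z :=
  strictMono_id.add_monotone (hg.const_mul ht)

lemma continuous_characteristicFoot (hg : Monotone g) (ht : 0 ≤ t)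
    (hy : ∀ x, y x + t * g (y x) = x) : Continuous y :=
  ((strictMono_characteristic hg ht).orderIsoOfRightInverse _ y hy).symm.continuous

lemma hasDerivAt_comp_characteristicFoot {q x : ℝ} (hg : Monotone g) (ht : 0 ≤ t)
    (hy : ∀ x, y x + t * g (y x) = x) (hq : HasDerivAt g q (y x)) :
    HasDerivAt (g ∘ y) (q / (1 + t * q)) x := by
  have hq₀ : 0 ≤ q := hq.deriv ▸ hg.deriv_nonneg
  have hfoot : HasDerivAt y (1 + t * q)⁻¹ x :=
    ((hasDerivAt_id _).add (hq.const_mul t)).of_local_left_inverse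
      (continuous_characteristicFoot hg ht hy).continuousAt (by positivity) (.of_forall hy)
  simpa only [div_eq_mul_inv] using hq.comp x hfoot

lemma div_one_add_mul_le {q : ℝ} (ht : 0 ≤ t) (hq : 0 ≤ q) (hqK : q ≤ K) :
    q / (1 + t * q) ≤ (K + 1) / (1 + t) := by
  rw [div_le_div_iff₀ (by positivity) (by positivity)]
  nlinarith [mul_nonneg ht hq, mul_nonneg (mul_nonneg ht hq) (hq.trans hqK)]

lemma IsRarefactionDatum.monotone (hg : IsRarefactionDatum L K C g) : Monotone g :=
  monotone_of_deriv_nonneg hg.differentiable fun z ↦ (hg.deriv_mem_Icc z).1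

-- Multiply `X = z + t * g z` by `g z`: the tail bound controls `-z * g z`, and the remaining
-- product `√(1 + t) * g z * s` is absorbed by Young's inequality.
lemma IsRarefactionDatum.sq_le_div_one_add {s z X : ℝ} (hg : IsRarefactionDatum L K C g)
    (ht : 0 ≤ t) (hz : z + t * g z = X) (hX : X ≤ s * √(1 + t)) :
    g z ^ 2 ≤ (s ^ 2 + 2 * C + 2 * L ^ 2) / (1 + t) := by
  obtain ⟨hg₀, hgL⟩ := hg.mem_Ioo z
  have hcharacteristic : t * g z ^ 2 ≤ X * g z + C := by
    linear_combination hg.neg_mul_le z + g z * hz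
  have hXg : X * g z ≤ s * (√(1 + t) * g z) := by
    rw [← mul_assoc]
    exact mul_le_mul_of_nonneg_right hX hg₀.le
  have hyoung : 2 * (s * (√(1 + t) * g z)) ≤ s ^ 2 + (1 + t) * g z ^ 2 := by
    have := two_mul_le_add_sq s (√(1 + t) * g z)
    rw [mul_pow, sq_sqrt (by positivity)] at this
    linarith
  have hbounded : g z ^ 2 ≤ L ^ 2 := pow_le_pow_left₀ hg₀.le hgL.le 2
  rw [le_div_iff₀ (by positivity)]
  linarith

end Characteristics

/-- The approximate rarefaction wave at a fixed time: `g` is the Burgers datum, `y x` the foot of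
the characteristic through `x`, and `linv` a left inverse of the characteristic speed `deriv f`. -/
def rarefactionWave (linv g y : ℝ → ℝ) (x : ℝ) : ℝ := linv (g (y x))

section Rarefaction

variable {c up K C t x : ℝ} {f linv g y : ℝ → ℝ}

lemma IsRarefactionDatum.mem_Ioo_deriv (hf : IsDegenerateConvexFlux c up f)
    (hg : IsRarefactionDatum (deriv f up) K C g) (z : ℝ) :
    g z ∈ Ioo (deriv f 0) (deriv f up) := by
  rw [hf.deriv_eq_zero le_rfl]
  exact hg.mem_Ioo z

lemma rarefactionWave_mem_Ioo (hf : IsDegenerateConvexFlux c up f)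
    (hlinv : LeftInvOn linv (deriv f) (Icc 0 up)) (hg : IsRarefactionDatum (deriv f up) K C g) :
    rarefactionWave linv g y x ∈ Ioo 0 up :=
  (mem_Ioo_and_apply_eq_of_leftInvOn hf.up_pos.le hf.continuous_deriv.continuousOn hlinv
    (hg.mem_Ioo_deriv hf (y x))).1

lemma deriv_flux_rarefactionWave (hf : IsDegenerateConvexFlux c up f)
    (hlinv : LeftInvOn linv (deriv f) (Icc 0 up)) (hg : IsRarefactionDatum (deriv f up) K C g) :
    deriv f (rarefactionWave linv g y x) = g (y x) :=
  (mem_Ioo_and_apply_eq_of_leftInvOn hf.up_pos.le hf.continuous_deriv.continuousOn hlinv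
    (hg.mem_Ioo_deriv hf (y x))).2

lemma hasDerivAt_rarefactionWave (hf : IsDegenerateConvexFlux c up f)
    (hlinv : LeftInvOn linv (deriv f) (Icc 0 up)) (hg : IsRarefactionDatum (deriv f up) K C g)
    (ht : 0 ≤ t) (hy : ∀ x, y x + t * g (y x) = x) :
    HasDerivAt (rarefactionWave linv g y) ((deriv (deriv f) (rarefactionWave linv g y x))⁻¹ *
      (deriv g (y x) / (1 + t * deriv g (y x)))) x := by
  have hmem : rarefactionWave linv g y x ∈ Ioo 0 up := rarefactionWave_mem_Ioo hf hlinv hg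
  have hinv : HasDerivAt linv (deriv (deriv f) (rarefactionWave linv g y x))⁻¹ (g (y x)) :=
    hasDerivAt_of_leftInvOn_s8 hf.up_pos.le hf.continuous_deriv.continuousOn hf.strictMonoOn_deriv
      hlinv (hg.mem_Ioo_deriv hf (y x))
      (hf.differentiableAt_deriv _ hmem).hasDerivAt
      (hf.modulus_pos.trans_le (hf.le_deriv_deriv _ hmem)).ne'
  exact hinv.comp x
    (hasDerivAt_comp_characteristicFoot hg.monotone ht hy (hg.differentiable _).hasDerivAt)

lemma deriv_rarefactionWave_mem_Icc (hf : IsDegenerateConvexFlux c up f)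
    (hlinv : LeftInvOn linv (deriv f) (Icc 0 up)) (hg : IsRarefactionDatum (deriv f up) K C g)
    (ht : 0 ≤ t) (hy : ∀ x, y x + t * g (y x) = x) :
    deriv (rarefactionWave linv g y) x ∈ Icc 0 ((K + 1) / c / (1 + t)) := by
  have hconvex := hf.le_deriv_deriv _ (rarefactionWave_mem_Ioo (y := y) (x := x) hf hlinv hg)
  have hconvex_pos := hf.modulus_pos.trans_le hconvex
  obtain ⟨hq, hqK⟩ := hg.deriv_mem_Icc (y x)
  rw [(hasDerivAt_rarefactionWave hf hlinv hg ht hy).deriv]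
  refine ⟨by positivity, ?_⟩
  calc _ ≤ c⁻¹ * ((K + 1) / (1 + t)) :=
        mul_le_mul (inv_anti₀ hf.modulus_pos hconvex) (div_one_add_mul_le ht hq hqK)
          (by positivity) (inv_nonneg.2 hf.modulus_pos.le)
    _ = (K + 1) / c / (1 + t) := by ring

lemma differentiable_rarefactionWave (hf : IsDegenerateConvexFlux c up f)
    (hlinv : LeftInvOn linv (deriv f) (Icc 0 up)) (hg : IsRarefactionDatum (deriv f up) K C g)
    (ht : 0 ≤ t) (hy : ∀ x, y x + t * g (y x) = x) :
    Differentiable ℝ (rarefactionWave linv g y) :=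
  fun _ ↦ (hasDerivAt_rarefactionWave hf hlinv hg ht hy).differentiableAt

lemma monotone_rarefactionWave (hf : IsDegenerateConvexFlux c up f)
    (hlinv : LeftInvOn linv (deriv f) (Icc 0 up)) (hg : IsRarefactionDatum (deriv f up) K C g)
    (ht : 0 ≤ t) (hy : ∀ x, y x + t * g (y x) = x) :
    Monotone (rarefactionWave linv g y) :=
  monotone_of_deriv_nonneg (differentiable_rarefactionWave hf hlinv hg ht hy) fun _ ↦
    (deriv_rarefactionWave_mem_Icc hf hlinv hg ht hy).1

lemma flux_rarefactionWave_le {s X : ℝ} (hf : IsDegenerateConvexFlux c up f)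
    (hlinv : LeftInvOn linv (deriv f) (Icc 0 up)) (hg : IsRarefactionDatum (deriv f up) K C g)
    (ht : 0 ≤ t) (hy : ∀ x, y x + t * g (y x) = x) (hX : X ≤ s * √(1 + t)) :
    f (rarefactionWave linv g y X) ≤ (s ^ 2 + 2 * C + 2 * deriv f up ^ 2) / c / (1 + t) := by
  calc f (rarefactionWave linv g y X) ≤ g (y X) ^ 2 / c := by
        rw [← deriv_flux_rarefactionWave hf hlinv hg]
        exact hf.le_deriv_sq_div (Ioo_subset_Icc_self (rarefactionWave_mem_Ioo hf hlinv hg))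
    _ ≤ (s ^ 2 + 2 * C + 2 * deriv f up ^ 2) / (1 + t) / c :=
        div_le_div_of_nonneg_right (hg.sq_le_div_one_add ht (hy X) hX) hf.modulus_pos.le
    _ = _ := div_right_comm _ _ _

end Rarefaction

lemma integral_one_sub_sq_rpow {m : ℝ} (hm : 0 ≤ m) :
    ∫ x in (0 : ℝ)..1, (1 - x ^ 2) ^ m = ∫ θ in (0 : ℝ)..π / 2, sin θ ^ (2 * m + 1) := by
  have hsubst := intervalIntegral.integral_comp_mul_deriv (a := π / 2) (b := 0)
    (g := fun x ↦ (1 - x ^ 2) ^ m) (fun θ _ ↦ hasDerivAt_cos θ) continuous_sin.neg.continuousOn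
    (Continuous.rpow_const (by fun_prop) fun _ ↦ Or.inr hm)
  rw [cos_pi_div_two, cos_zero] at hsubst
  rw [← hsubst, intervalIntegral.integral_symm, ← intervalIntegral.integral_neg]
  refine intervalIntegral.integral_congr fun θ hθ ↦ ?_
  rw [uIcc_of_le (by positivity)] at hθ
  have hsin : 0 ≤ sin θ := sin_nonneg_of_nonneg_of_le_pi hθ.1 (by linarith [hθ.2, pi_pos])
  simp only [Function.comp_apply, ← sin_sq, mul_neg, neg_neg]
  rw [rpow_add_one' hsin (by positivity), rpow_mul hsin, rpow_two]

lemma integral_max_one_sub_sq_rpow {m : ℝ} (hm : 0 < m) :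
    ∫ x : ℝ, max (1 - x ^ 2) 0 ^ m = 2 * ∫ θ in (0 : ℝ)..π / 2, sin θ ^ (2 * m + 1) := by
  have heven := integral_comp_abs (f := fun x : ℝ ↦ max (1 - x ^ 2) 0 ^ m)
  simp only [sq_abs] at heven
  have hsupport : ∫ x in Ioi (0 : ℝ), max (1 - x ^ 2) 0 ^ m =
      ∫ x in Ioc (0 : ℝ) 1, max (1 - x ^ 2) 0 ^ m := by
    refine setIntegral_eq_of_subset_of_forall_sdiff_eq_zero measurableSet_Ioi
      Ioc_subset_Ioi_self fun x hx ↦ ?_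
    have hx₁ : 1 < x := not_le.1 fun h ↦ hx.2 ⟨hx.1, h⟩
    rw [max_eq_right (by nlinarith), zero_rpow hm.ne']
  rw [heven, hsupport, ← integral_one_sub_sq_rpow hm.le,
    intervalIntegral.integral_of_le zero_le_one]
  congr 1
  refine setIntegral_congr_fun measurableSet_Ioc fun x hx ↦ ?_
  have : 0 ≤ 1 - x ^ 2 := by nlinarith [hx.1, hx.2]
  simp only [max_eq_left this]

section BarenblattProfile

variable {p A B T x : ℝ}

lemma continuous_vfun (hp : 1 < p) : Continuous (vfun p A B T) := by
  have hexp : 0 ≤ 1 / (p - 1) := one_div_nonneg.2 (sub_pos.2 hp).le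
  unfold vfun
  exact continuous_const.mul (Continuous.rpow_const (by fun_prop) fun _ ↦ Or.inr hexp)

lemma vfun_nonneg (hT : 0 ≤ T) : 0 ≤ vfun p A B T x :=
  mul_nonneg (rpow_nonneg hT _) (rpow_nonneg (le_max_right _ _) _)

lemma vfun_le (hp : 1 < p) (hA : 0 ≤ A) (hB : 0 ≤ B) (hT : 0 ≤ T) :
    vfun p A B T x ≤ A ^ (1 / (p - 1)) * T ^ (-1 / (p + 1)) := by
  rw [mul_comm]
  refine mul_le_mul_of_nonneg_left ?_ (rpow_nonneg hT _)
  refine rpow_le_rpow (le_max_right _ _) (max_le (sub_le_self _ ?_) hA)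
    (one_div_nonneg.2 (sub_pos.2 hp).le)
  positivity

lemma vfun_eq_rescaled (hA : 0 < A) (hB : 0 ≤ B) :
    vfun p A B T x = T ^ (-1 / (p + 1)) * A ^ (1 / (p - 1)) *
      max (1 - (√(B / A) * T ^ (-1 / (p + 1)) * x) ^ 2) 0 ^ (1 / (p - 1)) := by
  have hfactor : max (A - B * (x * T ^ (-1 / (p + 1))) ^ 2) 0 =
      A * max (1 - (√(B / A) * T ^ (-1 / (p + 1)) * x) ^ 2) 0 := by
    rw [mul_max_of_nonneg _ _ hA.le, mul_zero]
    simp only [mul_pow, sq_sqrt (div_nonneg hB hA.le)]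
    congr 1
    field_simp
  rw [vfun, hfactor, mul_rpow hA.le (le_max_right _ _), ← mul_assoc]

lemma vfun_eq_zero (hp : 1 < p) (hA : 0 < A) (hB : 0 < B) (hT : 0 < T)
    (hx : √(A / B) * T ^ (1 / (p + 1)) ≤ |x|) : vfun p A B T x = 0 := by
  have hscale : 0 < √(B / A) * T ^ (-1 / (p + 1)) := by positivity
  have hinv : √(A / B) * T ^ (1 / (p + 1)) = (√(B / A) * T ^ (-1 / (p + 1)))⁻¹ := by
    rw [mul_inv, ← sqrt_inv, inv_div, ← rpow_neg hT.le, neg_div, neg_neg]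
  have hone : 1 ≤ |√(B / A) * T ^ (-1 / (p + 1)) * x| := by
    rwa [abs_mul, abs_of_pos hscale, ← inv_le_iff_one_le_mul₀' hscale, ← hinv]
  rw [vfun_eq_rescaled hA hB.le, max_eq_right (by linarith [(one_le_sq_iff_one_le_abs _).2 hone]),
    zero_rpow (one_div_pos.2 (sub_pos.2 hp)).ne', mul_zero]

lemma integrable_vfun (hp : 1 < p) (hA : 0 < A) (hB : 0 < B) (hT : 0 < T) :
    Integrable (vfun p A B T) := by
  refine (continuous_vfun hp).integrable_of_hasCompactSupport <|
    HasCompactSupport.intro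
      (isCompact_Icc (a := -(√(A / B) * T ^ (1 / (p + 1)))) (b := √(A / B) * T ^ (1 / (p + 1))))
      fun x hx ↦ vfun_eq_zero hp hA hB hT ?_
  by_contra! h
  exact hx (abs_le.1 h.le)

lemma integral_vfun (hp : 1 < p) (hA : 0 < A) (hB : 0 < B) (hT : 0 < T) :
    ∫ x, vfun p A B T x = 2 * A ^ ((p + 1) / (2 * (p - 1))) * B ^ (-1 / 2 : ℝ) *
      ∫ θ in (0 : ℝ)..π / 2, sin θ ^ ((p + 1) / (p - 1)) := by
  have hp₁ : p - 1 ≠ 0 := (sub_pos.2 hp).ne'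
  have hexp : 2 * (1 / (p - 1)) + 1 = (p + 1) / (p - 1) := by field_simp; ring
  have hA_pow : A ^ (1 / (p - 1)) * √A = A ^ ((p + 1) / (2 * (p - 1))) := by
    rw [sqrt_eq_rpow, ← rpow_add hA]
    congr 1
    field_simp
    ring
  have hB_pow : (√B)⁻¹ = B ^ (-1 / 2 : ℝ) := by
    rw [sqrt_eq_rpow, ← rpow_neg hB.le, neg_div]
  simp only [vfun_eq_rescaled hA hB.le]
  rw [integral_const_mul, Measure.integral_comp_mul_left
      (fun z ↦ max (1 - z ^ 2) 0 ^ (1 / (p - 1))), abs_of_pos (by positivity), smul_eq_mul,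
    integral_max_one_sub_sq_rpow (one_div_pos.2 (sub_pos.2 hp)), hexp, ← hA_pow, ← hB_pow,
    sqrt_div' _ hA.le]
  field_simp

end BarenblattProfile

lemma hasDerivAt_integral_Iio {v : ℝ → ℝ} (hv : Integrable v) (hcont : Continuous v) (x : ℝ) :
    HasDerivAt (fun z ↦ ∫ y in Iio z, v y) (v x) x := by
  have hsplit (z : ℝ) : ∫ y in Iio z, v y = (∫ y in Iic 0, v y) + ∫ y in (0 : ℝ)..z, v y := by
    rw [← integral_Iic_eq_integral_Iio,
      ← intervalIntegral.integral_Iic_sub_Iic hv.integrableOn hv.integrableOn, add_sub_cancel]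
  simp only [hsplit]
  exact (hcont.integral_hasStrictDerivAt 0 x).hasDerivAt.const_add _

/-- The viscous contact wave with far-field state `um` at `-∞`, for the Barenblatt profile at time
`T`; the wave of the paper at time `t` is the one with `T = 1 + t`. -/
noncomputable def contactWave (p A B um T x : ℝ) : ℝ := um + ∫ y in Iio x, vfun p A B T y

section ContactWave

variable {p A B um T x : ℝ}

lemma hasDerivAt_contactWave (hp : 1 < p) (hA : 0 < A) (hB : 0 < B) (hT : 0 < T) :
    HasDerivAt (contactWave p A B um T) (vfun p A B T x) x :=
  (hasDerivAt_integral_Iio (integrable_vfun hp hA hB hT) (continuous_vfun hp) x).const_add um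

lemma monotone_contactWave (hp : 1 < p) (hA : 0 < A) (hB : 0 < B) (hT : 0 < T) :
    Monotone (contactWave p A B um T) :=
  monotone_of_hasDerivAt_nonneg (fun _ ↦ hasDerivAt_contactWave hp hA hB hT)
    fun _ ↦ vfun_nonneg hT.le

lemma contactWave_nonpos (hp : 1 < p) (hA : 0 < A) (hB : 0 < B) (hT : 0 < T)
    (hmass : ∫ y, vfun p A B T y = -um) : contactWave p A B um T x ≤ 0 := by
  have := setIntegral_le_integral (s := Iio x) (integrable_vfun hp hA hB hT)
    (.of_forall fun _ ↦ vfun_nonneg hT.le)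
  rw [contactWave]
  linarith

lemma contactWave_eq_zero (hp : 1 < p) (hA : 0 < A) (hB : 0 < B) (hT : 0 < T)
    (hmass : ∫ y, vfun p A B T y = -um) (hx : √(A / B) * T ^ (1 / (p + 1)) ≤ x) :
    contactWave p A B um T x = 0 := by
  rw [contactWave, setIntegral_eq_integral_of_forall_compl_eq_zero fun z hz ↦ ?_, hmass,
    add_neg_cancel]
  exact vfun_eq_zero hp hA hB hT (hx.trans ((not_lt.1 hz).trans (le_abs_self z)))

end ContactWave

/-- The interaction term of the paper at a fixed time, for a wave `U` superposed on a rarefaction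
wave `W` of the flux `f`. -/
noncomputable def waveInteraction (f U W : ℝ → ℝ) (x : ℝ) : ℝ :=
  -((deriv f (U x + W x) - deriv f (W x)) * deriv W x) - deriv f (U x + W x) * deriv U x

section WaveInteraction

variable {c up x X : ℝ} {f U W : ℝ → ℝ}

lemma waveInteraction_eq_zero (hU : U x = 0) (hU' : deriv U x = 0) :
    waveInteraction f U W x = 0 := by
  rw [waveInteraction, hU, hU', zero_add, sub_self, zero_mul, neg_zero, mul_zero, sub_zero]

lemma abs_waveInteraction_le (hf : IsDegenerateConvexFlux c up f) (hU : Monotone U)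
    (hU₀ : U x ≤ 0) (hW : Monotone W) (hWup : W X ≤ up) (hx : x ≤ X) :
    |waveInteraction f U W x| ≤
      deriv f (W x) * deriv W x + deriv f (U x + W X) * deriv U x := by
  have hWx : W x ≤ W X := hW hx
  have hsum : U x + W x ≤ up := by linarith
  have hleft : deriv f (U x + W x) ≤ deriv f (W x) :=
    hf.monotoneOn_deriv hsum (hWx.trans hWup) (by linarith)
  have hright : deriv f (U x + W x) ≤ deriv f (U x + W X) :=
    hf.monotoneOn_deriv hsum (mem_Iic.2 (by linarith)) (by linarith)
  have hleft_mul := mul_le_mul_of_nonneg_right hleft (hW.deriv_nonneg (x := x))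
  have hright_mul := mul_le_mul_of_nonneg_right hright (hU.deriv_nonneg (x := x))
  have hWnonneg := mul_nonneg (hf.deriv_nonneg hsum) (hW.deriv_nonneg (x := x))
  have hUnonneg := mul_nonneg (hf.deriv_nonneg hsum) (hU.deriv_nonneg (x := x))
  rw [waveInteraction, abs_le]
  constructor <;> linarith

-- Freezing the rarefaction wave at `X` in the second summand of `abs_waveInteraction_le` makes the
-- bound an exact derivative.
lemma lintegral_abs_waveInteraction_le (hf : IsDegenerateConvexFlux c up f)
    (hUd : Differentiable ℝ U) (hU : Monotone U) (hU₀ : ∀ x, U x ≤ 0) (hUX : U X = 0)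
    (hWd : Differentiable ℝ W) (hW : Monotone W) (hWup : ∀ x, W x ≤ up) :
    ∫⁻ x, ENNReal.ofReal |waveInteraction f U W x| ≤ ENNReal.ofReal (2 * f (W X)) := by
  have hsum (x : ℝ) : U x + W X ≤ up := by linarith [hU₀ x, hWup X]
  have hsupport : (Function.support fun x ↦ ENNReal.ofReal |waveInteraction f U W x|) ⊆ Iio X := by
    refine Function.support_subset_iff'.2 fun x hx ↦ ?_
    have hUx : U x = 0 := (hU₀ x).antisymm (hUX ▸ hU (not_lt.1 hx))
    have hmax : IsLocalMax U x := .of_forall fun z ↦ hUx ▸ hU₀ z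
    rw [waveInteraction_eq_zero hUx hmax.deriv_eq_zero, abs_zero, ENNReal.ofReal_zero]
  have hderiv (x : ℝ) : HasDerivAt (fun z ↦ f (W z) + f (U z + W X))
      (deriv f (W x) * deriv W x + deriv f (U x + W X) * deriv U x) x :=
    ((hf.differentiable _).hasDerivAt.comp x (hWd x).hasDerivAt).add
      ((hf.differentiable _).hasDerivAt.comp x ((hUd x).hasDerivAt.add_const (W X)))
  have hmono : Monotone fun z ↦ f (W z) + f (U z + W X) := fun x z hxz ↦
    add_le_add (hf.monotoneOn (hWup x) (hWup z) (hW hxz))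
      (hf.monotoneOn (hsum x) (hsum z) (by linarith [hU hxz]))
  have hmaps : MapsTo (fun z ↦ f (W z) + f (U z + W X)) (Iio X) (Icc 0 (2 * f (W X))) :=
    fun x hx ↦ ⟨add_nonneg (hf.nonneg (hWup x)) (hf.nonneg (hsum x)),
      (hmono (le_of_lt hx)).trans_eq (by simp only [hUX, zero_add, two_mul])⟩
  calc ∫⁻ x, ENNReal.ofReal |waveInteraction f U W x|
      = ∫⁻ x in Iio X, ENNReal.ofReal |waveInteraction f U W x| :=
        (setLIntegral_eq_of_support_subset hsupport).symm
    _ ≤ ∫⁻ x in Iio X, ENNReal.ofReal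
          (deriv f (W x) * deriv W x + deriv f (U x + W X) * deriv U x) :=
        setLIntegral_mono' measurableSet_Iio fun x hx ↦ ENNReal.ofReal_le_ofReal
          (abs_waveInteraction_le hf hU (hU₀ x) hW (hWup X) (le_of_lt hx))
    _ ≤ ENNReal.ofReal (2 * f (W X) - 0) :=
        setLIntegral_deriv_le_of_mapsTo_Icc measurableSet_Iio (fun x _ ↦ hderiv x)
          (hmono.monotoneOn _) hmaps
    _ = ENNReal.ofReal (2 * f (W X)) := by rw [sub_zero]

end WaveInteraction

lemma lintegral_rpow_add_deriv_mul_sq_le {W v : ℝ → ℝ} {m M S b q : ℝ} (hq : 0 ≤ q)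
    (hWd : Differentiable ℝ W) (hW : Monotone W) (hmem : ∀ x, W x ∈ Icc m M) (hv : ∀ x, 0 ≤ v x)
    (hS : ∀ x, v x + deriv W x ≤ S) (hb : ∀ x, deriv W x ≤ b) :
    ∫⁻ x, ENNReal.ofReal ((v x + deriv W x) ^ q * deriv W x ^ 2) ≤
      ENNReal.ofReal (S ^ q * b * (M - m)) := by
  have hW' (x : ℝ) : 0 ≤ deriv W x := hW.deriv_nonneg
  have hconst : 0 ≤ S ^ q * b :=
    mul_nonneg (rpow_nonneg ((add_nonneg (hv 0) (hW' 0)).trans (hS 0)) q) ((hW' 0).trans (hb 0))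
  have hpointwise (x : ℝ) : (v x + deriv W x) ^ q * deriv W x ^ 2 ≤ S ^ q * b * deriv W x := by
    have hpow : (v x + deriv W x) ^ q ≤ S ^ q :=
      rpow_le_rpow (add_nonneg (hv x) (hW' x)) (hS x) hq
    rw [sq, ← mul_assoc]
    exact mul_le_mul_of_nonneg_right (mul_le_mul hpow (hb x) (hW' x)
      (rpow_nonneg ((add_nonneg (hv x) (hW' x)).trans (hS x)) q)) (hW' x)
  have hvariation : ∫⁻ x, ENNReal.ofReal (deriv W x) ≤ ENNReal.ofReal (M - m) := by
    rw [← setLIntegral_univ]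
    exact setLIntegral_deriv_le_of_mapsTo_Icc .univ (fun x _ ↦ (hWd x).hasDerivAt)
      (hW.monotoneOn _) fun x _ ↦ hmem x
  calc ∫⁻ x, ENNReal.ofReal ((v x + deriv W x) ^ q * deriv W x ^ 2)
      ≤ ∫⁻ x, ENNReal.ofReal (S ^ q * b) * ENNReal.ofReal (deriv W x) :=
        lintegral_mono fun x ↦ by
          rw [← ENNReal.ofReal_mul hconst]
          exact ENNReal.ofReal_le_ofReal (hpointwise x)
    _ ≤ ENNReal.ofReal (S ^ q * b) * ENNReal.ofReal (M - m) := by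
        rw [lintegral_const_mul' _ _ ENNReal.ofReal_ne_top]
        exact mul_le_mul_right hvariation _
    _ = ENNReal.ofReal (S ^ q * b * (M - m)) := (ENNReal.ofReal_mul hconst).symm

section Superposition

variable {p q A B um up c K C t : ℝ} {f linv g y : ℝ → ℝ}

lemma lintegral_waveInteraction_contactWave_le (hp : 1 < p) (hA : 0 < A) (hB : 0 < B)
    (hmass : ∀ T, 0 < T → ∫ x, vfun p A B T x = -um) (hf : IsDegenerateConvexFlux c up f)
    (hlinv : LeftInvOn linv (deriv f) (Icc 0 up)) (hg : IsRarefactionDatum (deriv f up) K C g)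
    (ht : 0 ≤ t) (hy : ∀ x, y x + t * g (y x) = x) :
    ∫⁻ x, ENNReal.ofReal
        |waveInteraction f (contactWave p A B um (1 + t)) (rarefactionWave linv g y) x| ≤
      ENNReal.ofReal
        (2 * ((√(A / B) ^ 2 + 2 * C + 2 * deriv f up ^ 2) / c) / (1 + t)) := by
  have hT : 0 < 1 + t := by positivity
  have hspread : √(A / B) * (1 + t) ^ (1 / (p + 1)) ≤ √(A / B) * √(1 + t) := by
    rw [sqrt_eq_rpow (1 + t)]
    gcongr <;> linarith
  refine (lintegral_abs_waveInteraction_le hf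
    (fun _ ↦ (hasDerivAt_contactWave hp hA hB hT).differentiableAt)
    (monotone_contactWave hp hA hB hT)
    (fun _ ↦ contactWave_nonpos hp hA hB hT (hmass _ hT))
    (contactWave_eq_zero hp hA hB hT (hmass _ hT) le_rfl)
    (differentiable_rarefactionWave hf hlinv hg ht hy)
    (monotone_rarefactionWave hf hlinv hg ht hy)
    fun _ ↦ (rarefactionWave_mem_Ioo hf hlinv hg).2.le).trans ?_
  rw [mul_div_assoc]
  exact ENNReal.ofReal_le_ofReal <|
    mul_le_mul_of_nonneg_left (flux_rarefactionWave_le hf hlinv hg ht hy hspread) zero_le_two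

lemma lintegral_rpow_deriv_contactWave_add_le (hp : 1 < p) (hq : 0 ≤ q) (hA : 0 < A)
    (hB : 0 < B) (hf : IsDegenerateConvexFlux c up f)
    (hlinv : LeftInvOn linv (deriv f) (Icc 0 up)) (hg : IsRarefactionDatum (deriv f up) K C g)
    (ht : 0 ≤ t) (hy : ∀ x, y x + t * g (y x) = x) :
    ∫⁻ x, ENNReal.ofReal
        ((deriv (contactWave p A B um (1 + t)) x + deriv (rarefactionWave linv g y) x) ^ q *
          deriv (rarefactionWave linv g y) x ^ 2) ≤
      ENNReal.ofReal ((A ^ (1 / (p - 1)) + (K + 1) / c) ^ q * ((K + 1) / c) * up *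
        (1 + t) ^ (-(1 + q / (p + 1)))) := by
  have hT : 0 < 1 + t := by positivity
  have hc : 0 < c := hf.modulus_pos
  have hK : 0 ≤ K := (hg.deriv_mem_Icc 0).1.trans (hg.deriv_mem_Icc 0).2
  have hrate : (1 + t)⁻¹ ≤ (1 + t) ^ (-1 / (p + 1)) := by
    rw [← rpow_neg_one]
    refine rpow_le_rpow_of_exponent_le (by linarith) ?_
    rw [le_div_iff₀ (by linarith)]
    linarith
  have hslope (x : ℝ) := deriv_rarefactionWave_mem_Icc (x := x) hf hlinv hg ht hy
  have hsum (x : ℝ) : vfun p A B (1 + t) x + deriv (rarefactionWave linv g y) x ≤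
      (A ^ (1 / (p - 1)) + (K + 1) / c) * (1 + t) ^ (-1 / (p + 1)) := by
    rw [add_mul]
    refine add_le_add (vfun_le hp hA.le hB.le hT.le) ((hslope x).2.trans ?_)
    rw [div_eq_mul_inv _ (1 + t)]
    gcongr
  simp only [(hasDerivAt_contactWave hp hA hB hT).deriv]
  refine (lintegral_rpow_add_deriv_mul_sq_le hq
    (differentiable_rarefactionWave hf hlinv hg ht hy)
    (monotone_rarefactionWave hf hlinv hg ht hy)
    (fun _ ↦ Ioo_subset_Icc_self (rarefactionWave_mem_Ioo hf hlinv hg))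
    (fun _ ↦ vfun_nonneg hT.le) hsum fun x ↦ (hslope x).2).trans_eq ?_
  have hpow : ((1 + t) ^ (-1 / (p + 1))) ^ q * (1 + t)⁻¹ = (1 + t) ^ (-(1 + q / (p + 1))) := by
    rw [← rpow_mul hT.le, ← rpow_neg_one, ← rpow_add hT]
    congr 1
    ring
  rw [mul_rpow (by positivity) (by positivity), ← hpow]
  congr 1
  ring

theorem stmt_8_general {r : ℝ} {Y : ℝ → ℝ → ℝ} (hp : 1 < p) (hq : 0 < q) (hr : 1 < r) (hA : 0 < A)
    (hB : 0 < B)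
    (hnorm : 2 * A ^ ((p + 1) / (2 * (p - 1))) * B ^ (-1 / 2 : ℝ) *
      (∫ θ in (0 : ℝ)..π / 2, sin θ ^ ((p + 1) / (p - 1))) = -um)
    (hf : IsDegenerateConvexFlux c up f) (hlinv : LeftInvOn linv (deriv f) (Icc 0 up))
    (hg : IsRarefactionDatum (deriv f up) K C g)
    (hY : ∀ t x, 0 ≤ t → Y t x + t * g (Y t x) = x) :
    (∫⁻ t in Ioi (0 : ℝ), (∫⁻ x, ENNReal.ofReal |waveInteraction f (contactWave p A B um (1 + t))
      (rarefactionWave linv g (Y t)) x|) ^ r) < ⊤ ∧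
    (∫⁻ t in Ioi (0 : ℝ), ∫⁻ x, ENNReal.ofReal
      ((deriv (contactWave p A B um (1 + t)) x + deriv (rarefactionWave linv g (Y t)) x) ^ q *
        deriv (rarefactionWave linv g (Y t)) x ^ 2)) < ⊤ := by
  have hmass (T : ℝ) (hT : 0 < T) : ∫ x, vfun p A B T x = -um :=
    (integral_vfun hp hA hB hT).trans hnorm
  constructor
  · exact setLIntegral_Ioi_rpow_lt_top_of_le_div hr fun t ht ↦
      lintegral_waveInteraction_contactWave_le hp hA hB hmass hf hlinv hg ht fun x ↦ hY t x ht
  · exact setLIntegral_Ioi_lt_top_of_le_rpow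
      (lt_add_of_pos_right 1 (div_pos hq (by linarith : 0 < p + 1))) fun t ht ↦
        lintegral_rpow_deriv_contactWave_add_le hp hq.le hA hB hf hlinv hg ht fun x ↦ hY t x ht

end Superposition

theorem stmt_8 (p μ um up A B : ℝ)
    (hp : 1 < p) (hμ : 0 < μ) (hum : um < 0) (hup : 0 < up)
    (f : ℝ → ℝ) (hf1 : ContDiff ℝ 1 f) (hf3 : ContDiffOn ℝ 3 f (Set.Ici 0))
    (hfzero : ∀ u : ℝ, u ≤ 0 → f u = 0)
    (hconv : ∀ u : ℝ, 0 ≤ u →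
      0 < derivWithin (derivWithin f (Set.Ici 0)) (Set.Ici 0) u)
    (linv : ℝ → ℝ) (hlinv : ∀ u ∈ Set.Icc (0:ℝ) up, linv (deriv f u) = u)
    (Y : ℝ → ℝ → ℝ)
    (hY : ∀ t x : ℝ, 0 ≤ t → Y t x + t * w0 0 (deriv f up) (Y t x) = x)
    (hB : B = (p - 1) / (2 * μ * p * (p + 1))) (hA : 0 < A)
    (hnorm : 2 * A ^ ((p+1)/(2*(p-1))) * B ^ (-(1:ℝ)/2) *
      (∫ θ in (0:ℝ)..(Real.pi/2), Real.sin θ ^ ((p+1)/(p-1))) = -um) :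
    -- `Ur` is the smooth approximate rarefaction wave connecting `0` to `u₊`,
    -- `U` is the viscous contact wave connecting `u₋` to `0`.
    let Ur : ℝ → ℝ → ℝ := fun t x => linv (w0 0 (deriv f up) (Y t x))
    let U : ℝ → ℝ → ℝ := fun t x => um + ∫ y in Set.Iio x, vfun p A B (1 + t) y
    let F : ℝ → ℝ → ℝ := fun t x =>
      -((deriv f (U t x + Ur t x) - deriv f (Ur t x)) * deriv (fun y => Ur t y) x)
        - deriv f (U t x + Ur t x) * deriv (fun y => U t y) x
    (∫⁻ t in Set.Ioi (0:ℝ),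
        (∫⁻ x : ℝ, ENNReal.ofReal |F t x|) ^ ((3*p+1)/(3*p))) < ⊤ ∧
    (∫⁻ t in Set.Ioi (0:ℝ), ∫⁻ x : ℝ,
        ENNReal.ofReal ((deriv (fun y => U t y) x + deriv (fun y => Ur t y) x) ^ (p-1)
          * (deriv (fun y => Ur t y) x) ^ 2)) < ⊤ := by
  obtain ⟨c, hf⟩ := exists_isDegenerateConvexFlux hup hf1 (hf3.of_le (by norm_num)) hfzero
    fun u hu ↦ hconv u hu.1
  have hp₁ : 0 < p - 1 := sub_pos.2 hp
  have hB₀ : 0 < B := by rw [hB]; positivity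
  have hr : 1 < (3 * p + 1) / (3 * p) := by rw [one_lt_div (by positivity)]; exact lt_add_one _
  exact stmt_8_general hp hp₁ hr hA hB₀ hnorm hf hlinv (isRarefactionDatum_w0 hf.deriv_up_pos) hY
end
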